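/- arXiv:1902.07937 — 2 statements merged into one kernel-verified Lean document; each statement's English description precedes it below -/
import Mathlib

section
/- For every k ≥ 2 and every integer n ≥ 2k, there exists a k-typed Schelling game with no stubborn agents, n strategic agents, at least two agents of each type, and a star topology with n+1 nodes, which admits an equilibrium assignment with social welfare at most 2 and also admits an assignment with social welfare at least n − 2k; consequently its price of anarchy is at least n/2 − k. -/
/-- A (social) Schelling game: agents `A`, of which `strategic` are the strategic
ones (the rest being stubborn), a social network `net` on the agents (the friends
of an agent are her neighbors in `net`, all other agents are her enemies), a
topology `top` on the set of locations `V`, and the preferred locations `loc`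
of the (stubborn) agents. -/
structure SchellingGame (A V : Type) where
  strategic : Finset A
  net : SimpleGraph A
  top : SimpleGraph V
  loc : A → V

namespace SchellingGame

variable {A V : Type} [Fintype A] [DecidableEq A] [Fintype V] [DecidableEq V]

/-- There are `n ≥ 2` agents, strictly more locations than agents, and the
stubborn agents have pairwise distinct preferred locations. -/
def WellFormed (g : SchellingGame A V) : Prop :=
  2 ≤ Fintype.card A ∧ Fintype.card A < Fintype.card V ∧
    Set.InjOn g.loc ↑(g.strategicᶜ)

/-- An assignment is an injective placement of the agents on the nodes of the
topology which places every stubborn agent at her preferred location. -/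
def IsAssignment (g : SchellingGame A V) (v : A → V) : Prop :=
  Function.Injective v ∧ ∀ i ∉ g.strategic, v i = g.loc i

/-- The number of friends of `i` occupying nodes adjacent to `v i`. -/
noncomputable def fcount (g : SchellingGame A V) (v : A → V) (i : A) : ℕ :=
  Nat.card {j : A // g.net.Adj i j ∧ g.top.Adj (v i) (v j)}

/-- The number of enemies of `i` occupying nodes adjacent to `v i`. -/
noncomputable def ecount (g : SchellingGame A V) (v : A → V) (i : A) : ℕ :=
  Nat.card {j : A // j ≠ i ∧ ¬ g.net.Adj i j ∧ g.top.Adj (v i) (v j)}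

/-- The utility of agent `i` under assignment `v`: `0` if `i` has no adjacent
friends, and otherwise the fraction of friends among her occupied neighbors. -/
noncomputable def util (g : SchellingGame A V) (v : A → V) (i : A) : ℚ :=
  if g.fcount v i = 0 then 0
  else (g.fcount v i : ℚ) / ((g.fcount v i : ℚ) + (g.ecount v i : ℚ))

/-- An assignment is an equilibrium if no strategic agent can strictly increase
her utility by relocating to an unoccupied node. -/
def IsEquilibrium (g : SchellingGame A V) (v : A → V) : Prop :=
  g.IsAssignment v ∧ ∀ i ∈ g.strategic, ∀ z : V, (∀ j : A, v j ≠ z) →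
    g.util (Function.update v i z) i ≤ g.util v i

/-- The social welfare: the total utility of the strategic agents. -/
noncomputable def SW (g : SchellingGame A V) (v : A → V) : ℚ :=
  ∑ i ∈ g.strategic, g.util v i

/-- `g` is a `k`-typed Schelling game with type map `typ`: two distinct agents are
friends iff they have the same type, and every type is nonempty. -/
def IsTypedGame (g : SchellingGame A V) (k : ℕ) (typ : A → Fin k) : Prop :=
  (∀ i j : A, g.net.Adj i j ↔ (i ≠ j ∧ typ i = typ j)) ∧ ∀ c : Fin k, ∃ i : A, typ i = c

end SchellingGame

/-- A star graph: one center node adjacent to all other nodes, and no other edges. -/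
def IsStar {V : Type} (G : SimpleGraph V) : Prop :=
  ∃ c : V, ∀ a b : V, G.Adj a b ↔ (a ≠ b ∧ (a = c ∨ b = c))

/-
On a star the only vertex that matters is the center. An agent on a leaf sees nobody but the
occupant `b` of the center, so her utility is `1` if she is a friend of `b` and `0` otherwise.
Moving to another leaf changes nothing, and `b` has nobody next to her after leaving the center;
hence every assignment that occupies the center is an equilibrium. Its welfare is the number of
friends of `b` plus the utility of `b`, so it lies between `m - 1` and `m`, where `m` is the size
of the type of `b`. It remains to give all types but one the size `2`: the center occupant of the
bad equilibrium is of a small type, that of the good assignment is of the large type.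
-/

namespace SchellingGame

section Utility

variable {A V : Type} {g : SchellingGame A V} {v : A → V} {i b : A} {r : V}

lemma util_nonneg (g : SchellingGame A V) (v : A → V) (i : A) : 0 ≤ g.util v i := by
  unfold util
  split_ifs <;> positivity

lemma util_le_one (g : SchellingGame A V) (v : A → V) (i : A) : g.util v i ≤ 1 := by
  unfold util
  split_ifs
  · exact zero_le_one
  · exact div_le_one_of_le₀ (le_add_of_nonneg_right (Nat.cast_nonneg _)) (by positivity)

lemma util_eq_zero_of_forall_not_adj (h : ∀ j, ¬ g.top.Adj (v i) (v j)) : g.util v i = 0 := by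
  simp [util, fcount, h]

lemma util_eq_ite_of_forall_adj_iff [Decidable (g.net.Adj i b)]
    (h : ∀ j, g.top.Adj (v i) (v j) ↔ j = b) :
    g.util v i = if g.net.Adj i b then 1 else 0 := by
  split_ifs with hib
  · have hfriends : ∀ j, g.net.Adj i j ∧ j = b ↔ j = b := by grind
    have henemies : ∀ j, ¬ (j ≠ i ∧ ¬ g.net.Adj i j ∧ j = b) := by grind
    simp [util, fcount, ecount, h, hfriends, henemies]
  · have hfriends : ∀ j, ¬ (g.net.Adj i j ∧ j = b) := by grind
    simp [util, fcount, h, hfriends]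

lemma util_eq_zero_of_forall_ne_center (htop : g.top = SimpleGraph.starGraph r)
    (hv : ∀ j, v j ≠ r) : g.util v i = 0 :=
  util_eq_zero_of_forall_not_adj fun j => by simp [htop, hv]

lemma util_eq_ite_of_ne_center [Decidable (g.net.Adj i b)]
    (htop : g.top = SimpleGraph.starGraph r) (hv : ∀ j, v j = r ↔ j = b) (hi : i ≠ b) :
    g.util v i = if g.net.Adj i b then 1 else 0 :=
  util_eq_ite_of_forall_adj_iff fun j => by grind [SimpleGraph.starGraph_adj]

end Utility

section Equilibrium

variable {A V : Type} [DecidableEq A] {g : SchellingGame A V} {v : A → V} {b : A} {r : V}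

theorem IsAssignment.isEquilibrium_of_apply_eq_center (hv : g.IsAssignment v)
    (htop : g.top = SimpleGraph.starGraph r) (hb : v b = r) : g.IsEquilibrium v := by
  classical
  have hcenter : ∀ j, v j = r ↔ j = b := fun j => hv.1.eq_iff' hb
  refine ⟨hv, fun i _ z hz => ?_⟩
  have hzr : z ≠ r := fun h => hz b (hb.trans h.symm)
  by_cases hi : i = b
  · have hempty : ∀ j, Function.update v i z j ≠ r := by grind
    rw [util_eq_zero_of_forall_ne_center htop hempty]
    exact util_nonneg g v i
  · have hcenter' : ∀ j, Function.update v i z j = r ↔ j = b := by grind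
    rw [util_eq_ite_of_ne_center htop hcenter' hi, util_eq_ite_of_ne_center htop hcenter hi]

theorem exists_isEquilibrium_apply_eq_center [Fintype A] [Fintype V]
    (hcard : Fintype.card A ≤ Fintype.card V) (hs : g.strategic = Finset.univ)
    (htop : g.top = SimpleGraph.starGraph r) (b : A) :
    ∃ v, g.IsEquilibrium v ∧ v b = r := by
  classical
  obtain ⟨e⟩ := Function.Embedding.nonempty_of_card_le hcard
  let v : A → V := Equiv.swap (e b) r ∘ e
  have hb : v b = r := Equiv.swap_apply_left (e b) r
  have hv : g.IsAssignment v :=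
    ⟨(Equiv.injective _).comp e.injective, fun i hi => absurd (hs ▸ Finset.mem_univ i) hi⟩
  exact ⟨v, hv.isEquilibrium_of_apply_eq_center htop hb, hb⟩

end Equilibrium

section Welfare

open scoped Finset

variable {A V : Type} {g : SchellingGame A V} {v : A → V} {b : A} {r : V}

lemma card_filter_adj_le_SW [DecidableRel g.net.Adj] (htop : g.top = SimpleGraph.starGraph r)
    (hv : ∀ j, v j = r ↔ j = b) :
    (#{i ∈ g.strategic | g.net.Adj i b} : ℚ) ≤ g.SW v := by
  rw [← Finset.sum_boole]
  refine Finset.sum_le_sum fun i _ => ?_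
  by_cases hi : i = b
  · simpa [hi] using util_nonneg g v b
  · exact (util_eq_ite_of_ne_center htop hv hi).ge

lemma SW_le_card_filter_adj_add_one [DecidableRel g.net.Adj]
    (htop : g.top = SimpleGraph.starGraph r) (hv : ∀ j, v j = r ↔ j = b) :
    g.SW v ≤ #{i ∈ g.strategic | g.net.Adj i b} + 1 := by
  classical
  calc g.SW v
      ≤ ∑ i ∈ g.strategic, ((if g.net.Adj i b then 1 else 0) + if i = b then 1 else 0) := by
        refine Finset.sum_le_sum fun i _ => ?_
        by_cases hi : i = b
        · simpa [hi] using util_le_one g v b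
        · simp [util_eq_ite_of_ne_center htop hv hi, hi]
    _ ≤ #{i ∈ g.strategic | g.net.Adj i b} + 1 := by
        rw [Finset.sum_add_distrib, Finset.sum_boole, Finset.sum_ite_eq']
        gcongr
        split_ifs <;> norm_num

end Welfare

section Typed

open scoped Finset

variable {A V : Type} [Fintype A] {g : SchellingGame A V} {k : ℕ} {typ : A → Fin k}
  {v : A → V} {b : A} {r : V}

lemma IsTypedGame.card_filter_adj_add_one [DecidableRel g.net.Adj] (hg : g.IsTypedGame k typ)
    (b : A) :
    #{i | g.net.Adj i b} + 1 = Nat.card {i // typ i = typ b} := by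
  classical
  have hclass : ({i | typ i = typ b} : Finset A) =
      insert b ({i | g.net.Adj i b} : Finset A) := by
    ext i
    have hadj := hg.1 i b
    grind
  rw [Nat.card_eq_fintype_card, Fintype.card_subtype, hclass,
    Finset.card_insert_of_notMem (by simp)]

theorem IsTypedGame.SW_mem_Icc (hg : g.IsTypedGame k typ) (hs : g.strategic = Finset.univ)
    (htop : g.top = SimpleGraph.starGraph r) (hv : Function.Injective v) (hb : v b = r) :
    g.SW v ∈ Set.Icc (Nat.card {i // typ i = typ b} - 1 : ℚ) (Nat.card {i // typ i = typ b}) := by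
  classical
  have hcenter : ∀ j, v j = r ↔ j = b := fun j => hv.eq_iff' hb
  rw [← hg.card_filter_adj_add_one b, ← hs, Nat.cast_add_one, add_sub_cancel_right]
  exact ⟨card_filter_adj_le_SW htop hcenter, SW_le_card_filter_adj_add_one htop hcenter⟩

theorem IsTypedGame.exists_isEquilibrium_SW_mem_Icc [DecidableEq A] [Fintype V]
    (hg : g.IsTypedGame k typ) (hcard : Fintype.card A ≤ Fintype.card V)
    (hs : g.strategic = Finset.univ) (htop : g.top = SimpleGraph.starGraph r) (c : Fin k) :
    ∃ v, g.IsEquilibrium v ∧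
      g.SW v ∈ Set.Icc (Nat.card {i // typ i = c} - 1 : ℚ) (Nat.card {i // typ i = c}) := by
  obtain ⟨b, rfl⟩ := hg.2 c
  obtain ⟨v, hv, hb⟩ := exists_isEquilibrium_apply_eq_center hcard hs htop b
  exact ⟨v, hv, hg.SW_mem_Icc hs htop hv.1.1 hb⟩

end Typed

/-- The game without stubborn agents on the star with center `r` in which two agents are friends
if they are distinct and have the same type. The value `r` of `loc` is arbitrary, since only
stubborn agents have a preferred location. -/
def starGame {A V T : Type} [Fintype A] (typ : A → T) (r : V) : SchellingGame A V where
  strategic := Finset.univ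
  net :=
    { Adj := fun i j => i ≠ j ∧ typ i = typ j
      symm := ⟨fun _ _ h => ⟨h.1.symm, h.2.symm⟩⟩
      loopless := ⟨fun _ h => h.1 rfl⟩ }
  top := SimpleGraph.starGraph r
  loc := fun _ => r

lemma wellFormed_starGame {A V T : Type} [Fintype A] [DecidableEq A] [Fintype V]
    (hA : 2 ≤ Fintype.card A) (hV : Fintype.card A < Fintype.card V) (typ : A → T) (r : V) :
    (starGame typ r).WellFormed :=
  ⟨hA, hV, by simp [starGame]⟩

lemma isTypedGame_starGame {A V : Type} [Fintype A] {k : ℕ} {typ : A → Fin k}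
    (htyp : Function.Surjective typ) (r : V) : (starGame typ r).IsTypedGame k typ :=
  ⟨fun _ _ => Iff.rfl, htyp⟩

end SchellingGame

lemma isStar_starGraph {V : Type} (r : V) : IsStar (SimpleGraph.starGraph r) :=
  ⟨r, fun _ _ => SimpleGraph.starGraph_adj⟩

lemma exists_forall_natCard_fiber_eq {A T : Type*} [Fintype A] [Fintype T] {m : T → ℕ}
    (hm : ∑ t, m t = Fintype.card A) : ∃ f : A → T, ∀ t, Nat.card {a // f a = t} = m t := by
  have hcard : Fintype.card A = Fintype.card ((t : T) × Fin (m t)) := by simp [hm]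
  let e : A ≃ (t : T) × Fin (m t) := Fintype.equivOfCardEq hcard
  refine ⟨fun a => (e a).1, fun t => ?_⟩
  rw [Nat.card_congr ((e.subtypeEquiv fun _ => Iff.rfl).trans (Equiv.sigmaSubtype t)), Nat.card_fin]

lemma exists_natCard_fiber_eq_two_of_ne {k n : ℕ} (hn : 2 * k ≤ n) (a : Fin k) :
    ∃ typ : Fin n → Fin k, (∀ c, 2 ≤ Nat.card {i // typ i = c}) ∧
      (∀ c ≠ a, Nat.card {i // typ i = c} = 2) ∧ Nat.card {i // typ i = a} + 2 * k = n + 2 := by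
  have hk : 1 ≤ k := a.pos
  let m : Fin k → ℕ := Function.update (fun _ => 2) a (n - 2 * (k - 1))
  have hm : ∑ c, m c = Fintype.card (Fin n) := by
    rw [Finset.sum_update_of_mem (Finset.mem_univ a), Finset.sum_const, Finset.card_univ_sdiff,
      Fintype.card_fin, Finset.card_singleton, Fintype.card_fin, smul_eq_mul]
    omega
  obtain ⟨typ, htyp⟩ := exists_forall_natCard_fiber_eq hm
  have hsmall : ∀ c ≠ a, m c = 2 := fun c hc => Function.update_of_ne hc _ _
  have hlarge : m a = n - 2 * (k - 1) := Function.update_self ..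
  refine ⟨typ, fun c => ?_, fun c hc => (htyp c).trans (hsmall c hc), ?_⟩
  · rw [htyp c]
    obtain rfl | hc := eq_or_ne c a
    · omega
    · exact (hsmall c hc).ge
  · rw [htyp a]
    omega

/-- for all k ≥ 2 and n ≥ 2k there is a k-typed Schelling game with no
stubborn agents, n agents, at least two agents of each type and a star topology with
n+1 nodes, admitting an equilibrium of social welfare at most 2 and an assignment of
social welfare at least n - 2k; hence its price of anarchy is at least n/2 - k. -/
theorem stmt9 (k n : ℕ) (hk : 2 ≤ k) (hn : 2 * k ≤ n) :
    ∃ (g : SchellingGame (Fin n) (Fin (n + 1))) (typ : Fin n → Fin k),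
      g.WellFormed ∧ g.IsTypedGame k typ ∧ g.strategic = Finset.univ ∧
      (∀ c : Fin k, 2 ≤ Nat.card {i // typ i = c}) ∧
      IsStar g.top ∧
      (∃ v w, g.IsEquilibrium v ∧ g.SW v ≤ 2 ∧
        g.IsAssignment w ∧ (n : ℚ) - 2 * k ≤ g.SW w ∧
        ((n : ℚ) / 2 - k) * g.SW v ≤ g.SW w) := by
  have : Nontrivial (Fin k) := Fin.nontrivial_iff_two_le.2 hk
  obtain ⟨large, small, hne⟩ := exists_pair_ne (Fin k)
  obtain ⟨typ, htwo_le, htwo, hlarge⟩ := exists_natCard_fiber_eq_two_of_ne hn large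
  have hsurj : Function.Surjective typ := fun c =>
    nonempty_subtype.1 (Nat.card_pos_iff.1 (two_pos.trans_le (htwo_le c))).1
  let g : SchellingGame (Fin n) (Fin (n + 1)) := .starGame typ 0
  have hg : g.IsTypedGame k typ := SchellingGame.isTypedGame_starGame hsurj 0
  obtain ⟨v, hv, -, hSv⟩ := hg.exists_isEquilibrium_SW_mem_Icc (by simp) rfl rfl small
  obtain ⟨w, hw, hSw, -⟩ := hg.exists_isEquilibrium_SW_mem_Icc (by simp) rfl rfl large
  rw [htwo small hne.symm, Nat.cast_ofNat] at hSv
  have hlarge' : (Nat.card {i // typ i = large} : ℚ) + 2 * k = n + 2 := mod_cast hlarge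
  have hSw' : (n : ℚ) - 2 * k ≤ g.SW w := by linarith
  have hnk : (2 * k : ℚ) ≤ n := mod_cast hn
  have hratio : ((n : ℚ) / 2 - k) * g.SW v ≤ g.SW w :=
    calc ((n : ℚ) / 2 - k) * g.SW v ≤ (n / 2 - k) * 2 := by gcongr; linarith
      _ ≤ g.SW w := by linarith
  exact ⟨g, typ, SchellingGame.wellFormed_starGame (by simp; omega) (by simp) typ 0, hg, rfl,
    htwo_le, isStar_starGraph 0, v, w, hv, hSv, hw.1, hSw', hratio⟩
end

section
/- For every k ≥ 2 and every integer ℓ ≥ 2, there exists a k-typed Schelling game with no stubborn agents and exactly k(ℓ+1) agents of each type (hence n = k²(ℓ+1) agents in total), whose topology is connected with n+1 nodes, such that the game admits an assignment with social welfare k²(ℓ+1) (every agent has utility 1) and also admits an equilibrium assignment with social welfare k(ℓ+k); consequently its price of anarchy is at least (kℓ+k)/(ℓ+k), which tends to k as ℓ grows. -/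
/-!
Take `k` blocks, each the disjoint union of a `k`-clique and a complete `l`-partite graph with parts
of size `k`, and a hub adjacent to every node. If each type fills its own block, every agent has
utility `1`. Now exchange slot `b` of each part of block `a` with slot `a` of the same part of block
`b`. Every part then contains one agent of each type, so the agents outside the cliques have utility
`1 / k`. A deviator must move to the hub; there she sees all other agents, so her utility is at most
the share `1 / k` of her type in the population.
-/

namespace SchellingGame

section Utility

variable {A V : Type} [Finite A] {g : SchellingGame A V} {v : A → V} {i : A}

/-- The number of agents occupying nodes adjacent to `v i`, which is the denominator of the utility
of `i`. -/
noncomputable def occupiedDegree (g : SchellingGame A V) (v : A → V) (i : A) : ℕ :=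
  Nat.card {j : A // g.top.Adj (v i) (v j)}

theorem fcount_add_ecount (g : SchellingGame A V) (v : A → V) (i : A) :
    g.fcount v i + g.ecount v i = g.occupiedDegree v i := by
  classical
  have := Fintype.ofFinite A
  simp only [fcount, ecount, occupiedDegree, Nat.card_eq_fintype_card, Fintype.card_subtype]
  rw [← Finset.card_filter_add_card_filter_not (s := {j | g.top.Adj (v i) (v j)}) (g.net.Adj i),
    Finset.filter_filter, Finset.filter_filter]
  congr 2
  · simp only [and_comm]
  · have hself : ¬ g.top.Adj (v i) (v i) := g.top.irrefl
    grind

theorem util_eq_div (g : SchellingGame A V) (v : A → V) (i : A) :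
    g.util v i = g.fcount v i / g.occupiedDegree v i := by
  rw [← fcount_add_ecount, Nat.cast_add, util, ite_eq_right_iff]
  intro h
  rw [h, Nat.cast_zero, zero_div]

theorem util_eq_one (hnet : ∀ j, g.top.Adj (v i) (v j) → g.net.Adj i j)
    (hadj : ∃ j, g.top.Adj (v i) (v j)) : g.util v i = 1 := by
  have hcount : g.fcount v i = g.occupiedDegree v i :=
    Nat.card_congr (Equiv.subtypeEquivRight fun j => and_iff_right_of_imp (hnet j))
  have hpos : g.occupiedDegree v i ≠ 0 :=
    have := nonempty_subtype.2 hadj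
    Nat.card_pos.ne'
  rw [util_eq_div, hcount, div_self (Nat.cast_ne_zero.2 hpos)]

end Utility

section Relabel

variable {A V A' V' : Type} {e : A' ≃ A} {f : V' ≃ V} {g : SchellingGame A V} {v : A → V}

/-- The transport of a game along bijections of its agents and of its nodes. An assignment `v` of
`g` becomes the assignment `f.symm ∘ v ∘ e` of `g.relabel e f`. -/
def relabel (g : SchellingGame A V) (e : A' ≃ A) (f : V' ≃ V) : SchellingGame A' V' where
  strategic := g.strategic.map e.symm.toEmbedding
  net := g.net.comap e
  top := g.top.comap f
  loc := f.symm ∘ g.loc ∘ e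

theorem mem_strategic_relabel {i : A'} : i ∈ (g.relabel e f).strategic ↔ e i ∈ g.strategic := by
  simp [relabel, Finset.mem_map_equiv]

theorem util_relabel (g : SchellingGame A V) (v : A → V) (i : A') :
    (g.relabel e f).util (f.symm ∘ v ∘ e) i = g.util v (e i) := by
  have hfcount : (g.relabel e f).fcount (f.symm ∘ v ∘ e) i = g.fcount v (e i) :=
    Nat.card_congr (e.subtypeEquiv fun j => by simp [relabel])
  have hecount : (g.relabel e f).ecount (f.symm ∘ v ∘ e) i = g.ecount v (e i) :=
    Nat.card_congr (e.subtypeEquiv fun j => by simp [relabel])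
  rw [util, util, hfcount, hecount]

theorem SW_relabel (g : SchellingGame A V) (v : A → V) :
    (g.relabel e f).SW (f.symm ∘ v ∘ e) = g.SW v := by
  simp only [SW, util_relabel]
  simp [relabel]

theorem IsAssignment.relabel (hv : g.IsAssignment v) :
    (g.relabel e f).IsAssignment (f.symm ∘ v ∘ e) :=
  ⟨f.symm.injective.comp (hv.1.comp e.injective), fun i hi =>
    congrArg f.symm (hv.2 (e i) (mt mem_strategic_relabel.2 hi))⟩

theorem IsEquilibrium.relabel [DecidableEq A] [DecidableEq A'] (hv : g.IsEquilibrium v) :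
    (g.relabel e f).IsEquilibrium (f.symm ∘ v ∘ e) := by
  refine ⟨hv.1.relabel, fun i hi z hz => ?_⟩
  have hupdate : Function.update (f.symm ∘ v ∘ e) i z =
      f.symm ∘ Function.update v (e i) (f z) ∘ e := by
    rw [Function.update_comp_eq_of_injective _ e.injective, Function.comp_update,
      f.symm_apply_apply]
  rw [hupdate, util_relabel, util_relabel]
  refine hv.2 (e i) (mem_strategic_relabel.1 hi) (f z) fun j hj => hz (e.symm j) ?_
  simp [hj]

theorem IsTypedGame.relabel {k : ℕ} {typ : A → Fin k} (h : g.IsTypedGame k typ) :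
    (g.relabel e f).IsTypedGame k (typ ∘ e) :=
  ⟨fun i j => (h.1 (e i) (e j)).trans (by simp), Function.Surjective.comp h.2 e.surjective⟩

theorem WellFormed.relabel [Fintype A] [DecidableEq A] [Fintype V] [Fintype A'] [DecidableEq A']
    [Fintype V'] (h : g.WellFormed) : (g.relabel e f).WellFormed := by
  obtain ⟨htwo, hlt, hloc⟩ := h
  refine ⟨(Fintype.card_congr e).symm ▸ htwo, ?_, ?_⟩
  · rwa [Fintype.card_congr e, Fintype.card_congr f]
  · refine f.symm.injective.comp_injOn (hloc.comp e.injective.injOn fun i hi => ?_)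
    simpa [mem_strategic_relabel] using hi

theorem connected_top_relabel (h : g.top.Connected) : (g.relabel e f).top.Connected :=
  (SimpleGraph.Iso.comap f g.top).connected_iff.2 h

end Relabel

section OfTyping

variable {A V T : Type} [Fintype A] [Inhabited V]

/-- The game without stubborn agents on the topology `G` whose agents have the types `typ`. The
preferred locations do not matter and are all set to `default`. -/
def ofTyping (typ : A → T) (G : SimpleGraph V) : SchellingGame A V where
  strategic := Finset.univ
  net := ((⊤ : SimpleGraph T).comap typ)ᶜ
  top := G
  loc _ := default

variable {typ : A → T} {G : SimpleGraph V} {v : A → V} {i j : A}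

theorem ofTyping_net_adj : (ofTyping typ G).net.Adj i j ↔ i ≠ j ∧ typ i = typ j := by
  simp [ofTyping]

theorem ofTyping_isTypedGame {k : ℕ} {typ : A → Fin k} (h : Function.Surjective typ) :
    (ofTyping typ G).IsTypedGame k typ :=
  ⟨fun _ _ => ofTyping_net_adj, h⟩

theorem ofTyping_wellFormed [DecidableEq A] [Fintype V] (htwo : 2 ≤ Fintype.card A)
    (hlt : Fintype.card A < Fintype.card V) : (ofTyping typ G).WellFormed :=
  ⟨htwo, hlt, by simp [ofTyping]⟩

theorem ofTyping_isAssignment (hv : Function.Injective v) : (ofTyping typ G).IsAssignment v :=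
  ⟨hv, fun i hi => absurd (Finset.mem_univ i) hi⟩

theorem ofTyping_util_le_of_forall_adj (h : ∀ j ≠ i, G.Adj (v i) (v j)) :
    (ofTyping typ G).util v i ≤ Nat.card {j // typ j = typ i} / Fintype.card A := by
  classical
  set g := ofTyping typ G
  have hadj (j : A) : g.top.Adj (v i) (v j) ↔ j ≠ i :=
    ⟨fun hij hji => G.irrefl (hji ▸ hij), h j⟩
  have hdegree : g.occupiedDegree v i + 1 = Fintype.card A := by
    rw [occupiedDegree, Nat.subtype_card (Finset.univ.erase i) (by simp [hadj]),
      Finset.card_erase_add_one (Finset.mem_univ i), Finset.card_univ]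
  have hfcount : g.fcount v i + 1 = Nat.card {j // typ j = typ i} := by
    rw [fcount, Nat.subtype_card (({j | typ j = typ i} : Finset A).erase i)
        (by grind [ofTyping_net_adj]),
      Finset.card_erase_add_one (by simp), Nat.subtype_card {j | typ j = typ i} (by simp)]
  have hle : (g.fcount v i : ℚ) ≤ g.occupiedDegree v i := by
    exact_mod_cast (Nat.le_add_right _ _).trans_eq (fcount_add_ecount g v i)
  have hmediant : (g.fcount v i / g.occupiedDegree v i : ℚ) ≤
      (g.fcount v i + 1) / (g.occupiedDegree v i + 1) := by
    obtain hzero | hpos := (Nat.cast_nonneg (α := ℚ) (g.occupiedDegree v i)).eq_or_lt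
    · rw [← hzero, div_zero]
      positivity
    · rw [div_le_div_iff₀ hpos (by positivity)]
      linarith
  rw [util_eq_div, ← hdegree, ← hfcount]
  exact_mod_cast hmediant

end OfTyping

section Hub

/-- The graph obtained from `G` by adding the node `none` and joining it to all other nodes. -/
def hubGraph {A : Type} (G : SimpleGraph A) : SimpleGraph (Option A) where
  Adj
    | none, none => False
    | some i, some j => G.Adj i j
    | _, _ => True
  symm := ⟨by rintro (_ | i) (_ | j) h <;> first | exact h | exact G.adj_symm h⟩
  loopless := ⟨by rintro (_ | i) h; exacts [h, G.irrefl h]⟩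

variable {A T : Type} {G : SimpleGraph A} {typ : A → T}

theorem hubGraph_connected (G : SimpleGraph A) : (hubGraph G).Connected := by
  rw [SimpleGraph.connected_iff_exists_forall_reachable]
  refine ⟨none, ?_⟩
  rintro (_ | i)
  · rfl
  · exact SimpleGraph.Adj.reachable trivial

theorem ofTyping_hubGraph_isEquilibrium [Fintype A] [DecidableEq A] (σ : Equiv.Perm A)
    (h : ∀ i, (Nat.card {j // typ j = typ i} / Fintype.card A : ℚ) ≤
      (ofTyping typ (hubGraph G)).util (some ∘ σ) i) :
    (ofTyping typ (hubGraph G)).IsEquilibrium (some ∘ σ) := by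
  refine ⟨ofTyping_isAssignment ((Option.some_injective A).comp σ.injective), fun i _ z hz => ?_⟩
  have hhub : z = none := by
    rw [Option.eq_none_iff_forall_ne_some]
    intro x hx
    exact hz (σ.symm x) (by simp [hx])
  subst hhub
  refine (ofTyping_util_le_of_forall_adj fun j hj => ?_).trans (h i)
  rw [Function.update_self, Function.update_of_ne hj]
  trivial

end Hub

section Blocks

theorem card_fst_eq {α β : Type*} (a : α) : Nat.card {p : α × β // p.1 = a} = Nat.card β :=
  Nat.card_congr ⟨fun p => p.1.2, fun b => ⟨(a, b), rfl⟩, by rintro ⟨⟨_, b⟩, rfl⟩; rfl,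
    fun _ => rfl⟩

variable (T L : Type)

/-- The disjoint union of the complete graph on `T` and the complete multipartite graph with parts
`{c} × T` for `c : L`. -/
def blockGraph : SimpleGraph (T ⊕ L × T) :=
  ⊤ ⊕g (⊤ : SimpleGraph L).comap Prod.fst

variable {T L}

theorem exists_blockGraph_adj [Nontrivial T] [Nontrivial L] (x : T ⊕ L × T) :
    ∃ y, (blockGraph T L).Adj x y := by
  obtain b | ⟨c, b⟩ := x
  · exact (exists_ne b).imp' Sum.inl fun _ h => h.symm
  · exact (exists_ne c).imp' (fun c' => Sum.inr (c', b)) fun _ h => h.symm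

variable (T L) in
/-- The agents of `blockGame T L`, named after the nodes other than the hub: `(a, .inl b)` is slot
`b` of the clique of block `a`, and `(a, .inr (c, b))` is slot `b` of part `c` of block `a`. -/
abbrev BlockAgent : Type := T × (T ⊕ L × T)

variable (T L) in
/-- The game whose topology consists of one copy of `blockGraph T L` for each type and a hub. The
type of an agent is the block she is named after. -/
def blockGame [Fintype T] [Fintype L] : SchellingGame (BlockAgent T L) (Option (BlockAgent T L)) :=
  ofTyping Prod.fst (hubGraph (⊥ □ blockGraph T L))

/-- The permutation of the agents that exchanges slot `b` of part `c` of block `a` with slot `a` of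
part `c` of block `b`. -/
def exchange : Equiv.Perm (BlockAgent T L) :=
  Function.Involutive.toPerm
    (fun
      | (a, .inl b) => (a, .inl b)
      | (a, .inr (c, b)) => (b, .inr (c, a)))
    (by rintro ⟨a, b | ⟨c, b⟩⟩ <;> rfl)

@[simp]
theorem exchange_inl (a b : T) : exchange (L := L) (a, .inl b) = (a, .inl b) := rfl

@[simp]
theorem exchange_inr (a b : T) (c : L) : exchange (a, .inr (c, b)) = (b, .inr (c, a)) := rfl

variable [Fintype T] [Fintype L]

theorem card_blockAgent :
    Fintype.card (BlockAgent T L) = Fintype.card T ^ 2 * (Fintype.card L + 1) := by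
  rw [Fintype.card_prod, Fintype.card_sum, Fintype.card_prod]
  ring

theorem blockGame_strategic : (blockGame T L).strategic = Finset.univ := rfl

theorem blockGame_net_adj {i j : BlockAgent T L} :
    (blockGame T L).net.Adj i j ↔ i ≠ j ∧ i.1 = j.1 :=
  ofTyping_net_adj

theorem blockGame_top_adj {x y : BlockAgent T L} :
    (blockGame T L).top.Adj (some x) (some y) ↔ (blockGraph T L).Adj x.2 y.2 ∧ x.1 = y.1 := by
  change (⊥ □ blockGraph T L).Adj x y ↔ _
  simp

theorem blockGame_util_some [Nontrivial T] [Nontrivial L] (i : BlockAgent T L) :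
    (blockGame T L).util some i = 1 := by
  obtain ⟨y, hy⟩ := exists_blockGraph_adj i.2
  refine util_eq_one (fun j hj => blockGame_net_adj.2 ⟨?_, (blockGame_top_adj.1 hj).2⟩)
    ⟨(i.1, y), blockGame_top_adj.2 ⟨hy, rfl⟩⟩
  rintro rfl
  exact SimpleGraph.irrefl _ hj

theorem blockGame_util_exchange_inl [Nontrivial T] (a b : T) :
    (blockGame T L).util (some ∘ exchange) (a, .inl b) = 1 := by
  obtain ⟨b', hb⟩ := exists_ne b
  refine util_eq_one ?_ ⟨(a, .inl b'), blockGame_top_adj.2 ⟨hb.symm, rfl⟩⟩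
  rintro ⟨a', b' | ⟨c', b'⟩⟩ hj
  · obtain ⟨hne, haa'⟩ := blockGame_top_adj.1 hj
    refine blockGame_net_adj.2 ⟨?_, haa'⟩
    rintro ⟨⟩
    exact hne rfl
  · exact absurd (blockGame_top_adj.1 hj).1 (by simp [blockGraph])

theorem blockGame_util_exchange_inr [Nontrivial L] (a b : T) (c : L) :
    (blockGame T L).util (some ∘ exchange) (a, .inr (c, b)) = (Fintype.card T : ℚ)⁻¹ := by
  classical
  have hfcount : (blockGame T L).fcount (some ∘ exchange) (a, .inr (c, b)) =
      Fintype.card L - 1 := by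
    rw [fcount, Nat.subtype_card ({a} ×ˢ (({c}ᶜ : Finset L) ×ˢ {b}).map .inr)]
    · simp [Finset.card_compl]
    · rintro ⟨a', b' | ⟨c', b'⟩⟩
      · simp [blockGame_top_adj, blockGraph]
      · have htop : (blockGame T L).top.Adj (some (b, .inr (c, a))) (some (b', .inr (c', a'))) ↔
            c ≠ c' ∧ b = b' := by simp [blockGame_top_adj, blockGraph]
        have hmem : ((a', .inr (c', b')) : BlockAgent T L) ∈
            {a} ×ˢ (({c}ᶜ : Finset L) ×ˢ {b}).map .inr ↔ c' ≠ c ∧ b' = b ∧ a' = a := by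
          simp [eq_comm, and_assoc]
        grind [blockGame_net_adj, exchange_inr]
  have hdegree : (blockGame T L).occupiedDegree (some ∘ exchange) (a, .inr (c, b)) =
      Fintype.card T * (Fintype.card L - 1) := by
    rw [occupiedDegree, Nat.subtype_card (Finset.univ ×ˢ (({c}ᶜ : Finset L) ×ˢ {b}).map .inr)]
    · simp [Finset.card_compl]
    · rintro ⟨a', b' | ⟨c', b'⟩⟩ <;> simp [blockGame_top_adj, blockGraph, eq_comm]
  have hpos : ((Fintype.card L - 1 : ℕ) : ℚ) ≠ 0 :=
    Nat.cast_ne_zero.2 (Nat.sub_ne_zero_of_lt Fintype.one_lt_card)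
  rw [util_eq_div, hfcount, hdegree, Nat.cast_mul, div_mul_cancel_right₀ hpos]

theorem blockGame_SW_some [Nontrivial T] [Nontrivial L] :
    (blockGame T L).SW some = Fintype.card T ^ 2 * (Fintype.card L + 1) := by
  simp only [SW, blockGame_strategic, blockGame_util_some, Finset.sum_const, nsmul_one,
    Finset.card_univ, card_blockAgent]
  push_cast
  rfl

theorem blockGame_SW_exchange [Nontrivial T] [Nontrivial L] :
    (blockGame T L).SW (some ∘ exchange) =
      Fintype.card T * (Fintype.card L + Fintype.card T) := by
  simp only [SW, blockGame_strategic, Fintype.sum_prod_type, Fintype.sum_sum_type,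
    blockGame_util_exchange_inl, blockGame_util_exchange_inr, Finset.sum_const, Finset.card_univ,
    nsmul_eq_mul]
  field_simp
  ring

theorem blockGame_isEquilibrium_exchange [DecidableEq T] [DecidableEq L] [Nontrivial T]
    [Nontrivial L] : (blockGame T L).IsEquilibrium (some ∘ exchange) := by
  refine ofTyping_hubGraph_isEquilibrium exchange fun i => ?_
  have hshare : (Nat.card {j : BlockAgent T L // j.1 = i.1} /
      Fintype.card (BlockAgent T L) : ℚ) = (Fintype.card T : ℚ)⁻¹ := by
    rw [card_fst_eq, Nat.card_eq_fintype_card, Fintype.card_prod, Nat.cast_mul,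
      div_mul_cancel_right₀ (by positivity)]
  rw [hshare]
  obtain ⟨a, b | ⟨c, b⟩⟩ := i
  · exact (Nat.cast_inv_le_one _).trans_eq (blockGame_util_exchange_inl a b).symm
  · exact (blockGame_util_exchange_inr a b c).ge

end Blocks

end SchellingGame

/-- for all k ≥ 2 and ℓ ≥ 2 there is a k-typed Schelling game with no
stubborn agents, exactly k(ℓ+1) agents per type (n = k²(ℓ+1) agents), connected
topology with n+1 nodes, admitting an assignment of social welfare k²(ℓ+1) in which
every agent has utility 1, and an equilibrium of social welfare k(ℓ+k); hence its
price of anarchy is at least (kℓ+k)/(ℓ+k). -/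
theorem stmt11 (k l : ℕ) (hk : 2 ≤ k) (hl : 2 ≤ l) :
    ∃ (g : SchellingGame (Fin (k ^ 2 * (l + 1))) (Fin (k ^ 2 * (l + 1) + 1)))
      (typ : Fin (k ^ 2 * (l + 1)) → Fin k),
      g.WellFormed ∧ g.IsTypedGame k typ ∧ g.strategic = Finset.univ ∧
      (∀ c : Fin k, Nat.card {i // typ i = c} = k * (l + 1)) ∧
      g.top.Connected ∧
      (∃ v, g.IsAssignment v ∧ (∀ i, g.util v i = 1) ∧ g.SW v = (k ^ 2 * (l + 1) : ℚ)) ∧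
      (∃ v, g.IsEquilibrium v ∧ g.SW v = (k * (l + k) : ℚ)) := by
  have : Nontrivial (Fin k) := Fin.nontrivial_iff_two_le.2 hk
  have : Nontrivial (Fin l) := Fin.nontrivial_iff_two_le.2 hl
  have hcard : Fintype.card (SchellingGame.BlockAgent (Fin k) (Fin l)) = k ^ 2 * (l + 1) := by
    simpa only [Fintype.card_fin] using SchellingGame.card_blockAgent (T := Fin k) (L := Fin l)
  let e := (Fintype.equivFinOfCardEq hcard).symm
  let f := (finSuccEquiv _).trans e.optionCongr
  refine ⟨(SchellingGame.blockGame (Fin k) (Fin l)).relabel e f, Prod.fst ∘ e,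
    (SchellingGame.ofTyping_wellFormed Fintype.one_lt_card (by simp)).relabel,
    (SchellingGame.ofTyping_isTypedGame Prod.fst_surjective).relabel,
    Finset.map_univ_equiv _, fun c => ?_,
    SchellingGame.connected_top_relabel (SchellingGame.hubGraph_connected _),
    ⟨f.symm ∘ some ∘ e,
      (SchellingGame.ofTyping_isAssignment (Option.some_injective _)).relabel, fun i => ?_, ?_⟩,
    ⟨f.symm ∘ (some ∘ SchellingGame.exchange) ∘ e,
      SchellingGame.blockGame_isEquilibrium_exchange.relabel, ?_⟩⟩
  · refine (Nat.card_congr (e.subtypeEquiv fun _ => Iff.rfl)).trans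
      ((SchellingGame.card_fst_eq c).trans ?_)
    simp [mul_add_one, add_comm, mul_comm]
  · rw [SchellingGame.util_relabel, SchellingGame.blockGame_util_some]
  · simp [SchellingGame.SW_relabel, SchellingGame.blockGame_SW_some]
  · simp [SchellingGame.SW_relabel, SchellingGame.blockGame_SW_exchange]
end
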